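/- Fix x = (q, S, v, W, p, Λ) ∈ 𝒫 := ℝⁿ × ℝ × ℝⁿ × ℝ × ℝⁿ × ℝ with (∂L/∂S)(q, v, S) ≠ 0. Let Δ_𝒫(x) := {(δq, δS, δv, δW, δp, δΛ) : (δq, δS) ∈ C_V(q, v, S)} ⊆ ℝ³ⁿ⁺³ and let ω_𝒫 be the presymplectic form ω_𝒫((a, σ, b, τ, c, λ), (a′, σ′, b′, τ′, c′, λ′)) = ⟨a, c′⟩ − ⟨a′, c⟩ + σλ′ − σ′λ. Then ((q̇, Ṡ, v̇, Ẇ, ṗ, Λ̇), (α, 𝒯, β, Υ, u, Ψ)) ∈ D(ω_𝒫, Δ_𝒫(x)) if and only if: (∂L/∂S)(q, v, S)·(ṗ + α) = −(Λ̇ + 𝒯)·F^fr(q, v, S), (∂L/∂S)(q, v, S)·Ṡ = ⟨F^fr(q, v, S), q̇⟩, β = 0, Υ = 0, u = q̇, and Ψ = Ṡ. -/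

import Mathlib

open scoped RealInnerProductSpace

noncomputable section

/-- `ℝⁿ` with the Euclidean inner product. -/
abbrev E (n : ℕ) : Type := EuclideanSpace ℝ (Fin n)

/-- The Pontryagin bundle `𝒫 = T𝒬 ⊕ T*𝒬` of `𝒬 = ℝⁿ × ℝ`, with points
`x = (q, S, v, W, p, Λ)`. -/
abbrev P (n : ℕ) : Type := E n × ℝ × E n × ℝ × E n × ℝ

/-- Partial derivative `∂L/∂S` of the Lagrangian `L(q, v, S)`. -/
noncomputable def LS {n : ℕ} (L : E n → E n → ℝ → ℝ) (q v : E n) (S : ℝ) : ℝ :=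
  deriv (L q v) S

/-- The Dirac structure induced by a form `ω` and a subspace `Δ`, covectors being
identified with vectors via the pairing `pair` (the Euclidean inner product). -/
def Dirac {F : Type*} (pair ω : F → F → ℝ) (Δ : Set F) : Set (F × F) :=
  {p | p.1 ∈ Δ ∧ ∀ w ∈ Δ, pair p.2 w = ω p.1 w}

/-- Euclidean pairing on `𝒫`. -/
def pairP {n : ℕ} (ζ w : P n) : ℝ :=
  ⟪ζ.1, w.1⟫ + ζ.2.1 * w.2.1 + ⟪ζ.2.2.1, w.2.2.1⟫ + ζ.2.2.2.1 * w.2.2.2.1 +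
    ⟪ζ.2.2.2.2.1, w.2.2.2.2.1⟫ + ζ.2.2.2.2.2 * w.2.2.2.2.2

/-- Presymplectic form
`ω_𝒫((a,σ,b,τ,c,λ),(a',σ',b',τ',c',λ')) = ⟨a,c'⟩ − ⟨a',c⟩ + σλ' − σ'λ` on `𝒫`. -/
def omegaP {n : ℕ} (x y : P n) : ℝ :=
  ⟪x.1, y.2.2.2.2.1⟫ - ⟪y.1, x.2.2.2.2.1⟫ + x.2.1 * y.2.2.2.2.2 - y.2.1 * x.2.2.2.2.2

/-- local characterization of the induced Dirac structure on the
Pontryagin bundle `𝒫` of the thermodynamic configuration space. -/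
theorem statement9 {n : ℕ} (L : E n → E n → ℝ → ℝ) (Ffr : E n → E n → ℝ → E n)
    (q v p : E n) (S W Λ : ℝ) (hLS : LS L q v S ≠ 0)
    (qdot vdot pdot : E n) (Sdot Wdot Λdot : ℝ)
    (α β u : E n) (T Υ Ψ : ℝ) :
    ((⟨qdot, Sdot, vdot, Wdot, pdot, Λdot⟩ : P n), (⟨α, T, β, Υ, u, Ψ⟩ : P n)) ∈
      Dirac pairP omegaP
        {δ : P n | LS L q v S * δ.2.1 = ⟪Ffr q v S, δ.1⟫} ↔
    (LS L q v S • (pdot + α) = -((Λdot + T) • Ffr q v S) ∧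
     LS L q v S * Sdot = ⟪Ffr q v S, qdot⟫ ∧
     β = 0 ∧ Υ = 0 ∧ u = qdot ∧ Ψ = Sdot) := by
  set l := LS L q v S
  set F := Ffr q v S
  simp only [Dirac, pairP, omegaP, Set.mem_ofPred_eq, Prod.forall]
  constructor
  · rintro ⟨hΔ, hw⟩
    refine ⟨?_, hΔ, ?_, ?_, ?_, ?_⟩
    · refine ext_inner_right ℝ fun a => ?_
      have h := hw (l • a) ⟪F, a⟫ 0 0 0 0 (by rw [inner_smul_right])
      simp only [inner_smul_right, inner_smul_left, inner_zero_right, inner_add_left,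
        inner_neg_left, real_inner_comm pdot a, RCLike.conj_to_real] at h ⊢
      linarith
    · refine ext_inner_right ℝ fun b => ?_
      simpa using hw 0 0 b 0 0 0 (by simp)
    · simpa using hw 0 0 0 1 0 0 (by simp)
    · refine ext_inner_right ℝ fun c => ?_
      simpa using hw 0 0 0 0 c 0 (by simp)
    · simpa using hw 0 0 0 0 0 1 (by simp)
  · rintro ⟨hα, hΔ, rfl, rfl, rfl, rfl⟩
    refine ⟨hΔ, fun a σ b τ c μ hσ => mul_left_cancel₀ hLS ?_⟩
    have h := congrArg (fun z => ⟪z, a⟫) hα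
    simp only [inner_smul_left, inner_add_left, inner_neg_left, RCLike.conj_to_real,
      inner_zero_left, real_inner_comm pdot a, ← hσ] at h ⊢
    linear_combination h

end
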